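/- If T₁ : ℝ ⇒ ℝ and T₂ : ℝ ⇒ ℝ both belong to the class 𝒯, then the parallel sum (T₁⁻¹ + T₂⁻¹)⁻¹ also belongs to 𝒯, where S⁻¹(y) := {x ∈ ℝ : y ∈ S(x)} and (S₁+S₂)(x) := {u + v : u ∈ S₁(x), v ∈ S₂(x)}. -/

import Mathlib

/-!
Call a point `x` *vertical* for `T` if `T x` has at least two elements. The proof rests on a
characterization of `𝒯` that is symmetric under inversion: a maximal monotone `T` has finitely many
pieces of the three allowed kinds if and only if both `T` and `T⁻¹` have finitely many vertical
points (`finite_vert_of_pieces`, `finite_vert_inv_of_pieces`, `exists_breakpoints`). Indeed, away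
from the vertical points `T` is a continuous monotone function on its domain, and its plateaus are
the fibres over the vertical points of `T⁻¹`; the breakpoints are the vertical points together with
the ends of the plateaus and of the domain.

Let `A`, `B` be the inverses of maximal monotone extensions of `T₁`, `T₂`. A vertical point of
`A + B` is vertical for `A` or for `B`. If `w` lies in `(A + B) x` and in `(A + B) y` with
`x ≠ y`, monotonicity forces the two decompositions of `w` to agree, so `w` is a sum of vertical
points of `A⁻¹` and `B⁻¹`. Hence both finiteness conditions pass to `A + B`, and to its inverse.

On the real line `A + B` is maximal monotone as soon as the two domains meet (`maxMono_addOp`). If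
they do not meet, the parallel sum is empty and is contained in the extension of `T₁`.
-/

noncomputable section


/-- Finite sets of breakpoints `-∞ = b₀ < b₁ < ⋯ < b_m = +∞`. -/
structure Breakpoints where
  m : ℕ
  hm : 0 < m
  pts : ℕ → EReal
  bot : pts 0 = ⊥
  top : pts m = ⊤
  mono : ∀ i j : ℕ, i < j → j ≤ m → pts i < pts j

/-- The `i`-th open interval `(bᵢ, bᵢ₊₁)` determined by the breakpoints. -/
def Breakpoints.itv (B : Breakpoints) (i : ℕ) : Set ℝ :=
  {x : ℝ | B.pts i < (x : EReal) ∧ (x : EReal) < B.pts (i + 1)}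

/-- Convexity for extended-real-valued functions on `ℝ`. -/
def ERealConvex (f : ℝ → EReal) : Prop :=
  ∀ x y a b : ℝ, 0 ≤ a → 0 ≤ b → a + b = 1 →
    f (a * x + b * y) ≤ (a : EReal) * f x + (b : EReal) * f y

/-- The effective domain of an extended-real-valued function nowhere equal to `-∞`. -/
def effDom (f : ℝ → EReal) : Set ℝ := {x : ℝ | f x ≠ ⊤}

/-- `f` is (finite and) affine on `s`. -/
def IsAffineOn (f : ℝ → EReal) (s : Set ℝ) : Prop :=
  ∃ c d : ℝ, ∀ x ∈ s, f x = ((c * x + d : ℝ) : EReal)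

/-- `f` is (finite,) strictly convex and differentiable on `s`. -/
def IsStrictConvexDiffOn (f : ℝ → EReal) (s : Set ℝ) : Prop :=
  ∃ g : ℝ → ℝ, (∀ x ∈ s, f x = (g x : EReal)) ∧ StrictConvexOn ℝ s g ∧
    ∀ x ∈ s, DifferentiableAt ℝ g x

/-- Membership in the class `F(A)` for the breakpoint set `A = B`. -/
def MemFA (B : Breakpoints) (f : ℝ → EReal) : Prop :=
  (∀ x, f x ≠ ⊥) ∧ LowerSemicontinuous f ∧ ERealConvex f ∧
  ContinuousOn f (effDom f) ∧
  ∀ i : ℕ, i < B.m →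
    IsAffineOn f (B.itv i) ∨ IsStrictConvexDiffOn f (B.itv i) ∨
      ∀ x ∈ B.itv i, f x = ⊤

/-- Membership in the class `F`. -/
def MemF (f : ℝ → EReal) : Prop := ∃ B : Breakpoints, MemFA B f

/-- The convex subdifferential of `f : ℝ → (-∞,+∞]` (empty outside the effective domain). -/
def subdiff (f : ℝ → EReal) (x : ℝ) : Set ℝ :=
  {φ : ℝ | f x ≠ ⊤ ∧ ∀ y : ℝ, ((φ * (y - x) : ℝ) : EReal) + f x ≤ f y}

/-- `T` is a monotone operator. -/
def MonotoneOp (T : ℝ → Set ℝ) : Prop :=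
  ∀ ⦃x u y v : ℝ⦄, u ∈ T x → v ∈ T y → 0 ≤ (u - v) * (x - y)

/-- `T` is a maximal monotone operator: its graph is not properly contained in the
graph of any monotone operator. -/
def MaxMonotoneOp (T : ℝ → Set ℝ) : Prop :=
  MonotoneOp T ∧
    ∀ S : ℝ → Set ℝ, MonotoneOp S → (∀ x, T x ⊆ S x) → ∀ x, S x ⊆ T x

/-- `T` is single-valued and constant on `s`. -/
def SingleConstOn (T : ℝ → Set ℝ) (s : Set ℝ) : Prop :=
  ∃ c : ℝ, ∀ x ∈ s, T x = {c}

/-- `T` is single-valued, continuous and strictly monotone on `s`. -/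
def SingleContStrictMonoOn (T : ℝ → Set ℝ) (s : Set ℝ) : Prop :=
  ∃ g : ℝ → ℝ, (∀ x ∈ s, T x = {g x}) ∧ ContinuousOn g s ∧ StrictMonoOn g s

/-- `T` is identically equal to the empty set on `s`. -/
def EmptyOn (T : ℝ → Set ℝ) (s : Set ℝ) : Prop := ∀ x ∈ s, T x = ∅

/-- Membership in the class `𝒯(B)`. -/
def MemTB (B : Breakpoints) (T : ℝ → Set ℝ) : Prop :=
  ∃ T' : ℝ → Set ℝ, MaxMonotoneOp T' ∧ (∀ x, T x ⊆ T' x) ∧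
    ∀ i : ℕ, i < B.m →
      SingleConstOn T' (B.itv i) ∨ SingleContStrictMonoOn T' (B.itv i) ∨
        EmptyOn T' (B.itv i)

/-- Membership in the class `𝒯`. -/
def MemT (T : ℝ → Set ℝ) : Prop := ∃ B : Breakpoints, MemTB B T

/-- The inverse of a set-valued operator. -/
def invOp (T : ℝ → Set ℝ) : ℝ → Set ℝ := fun y => {x : ℝ | y ∈ T x}

/-- The pointwise (Minkowski) sum of two set-valued operators. -/
def addOp (S₁ S₂ : ℝ → Set ℝ) : ℝ → Set ℝ :=
  fun x => {w : ℝ | ∃ u ∈ S₁ x, ∃ v ∈ S₂ x, w = u + v}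

/-! ### Maximal monotone operators on the line -/

/-- Maximality tested on single points: `v ∈ T y` as soon as `(y, v)` is monotonically related
to the whole graph. -/
theorem MaxMonotoneOp.mem_of_related {T : ℝ → Set ℝ} (hT : MaxMonotoneOp T) {y v : ℝ}
    (h : ∀ x u, u ∈ T x → 0 ≤ (v - u) * (y - x)) : v ∈ T y := by
  refine hT.2 (fun x => {u | u ∈ T x ∨ (x = y ∧ u = v)}) ?_ (fun x u hu => Or.inl hu) y
    (Or.inr ⟨rfl, rfl⟩)
  rintro x u x' u' (hu | ⟨rfl, rfl⟩) (hu' | ⟨rfl, rfl⟩)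
  · exact hT.1 hu hu'
  · have := h x u hu
    nlinarith
  · exact h x' u' hu'
  · simp

theorem MaxMonotoneOp.of_related {T : ℝ → Set ℝ} (hT : MonotoneOp T)
    (h : ∀ y v, (∀ x u, u ∈ T x → 0 ≤ (v - u) * (y - x)) → v ∈ T y) : MaxMonotoneOp T :=
  ⟨hT, fun _ hS hTS y _ hv => h y _ fun _ _ hu => hS hv (hTS _ hu)⟩

theorem MonotoneOp.le {T : ℝ → Set ℝ} (hT : MonotoneOp T) {x y u v : ℝ} (hu : u ∈ T x)
    (hv : v ∈ T y) (hxy : x < y) : u ≤ v := by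
  by_contra! h
  have := hT hu hv
  nlinarith

theorem MaxMonotoneOp.inv {T : ℝ → Set ℝ} (hT : MaxMonotoneOp T) : MaxMonotoneOp (invOp T) := by
  refine MaxMonotoneOp.of_related ?_ ?_
  · intro x u y v hu hv
    have := hT.1 hu hv
    nlinarith
  · intro y v h
    refine hT.mem_of_related fun x u hu => ?_
    have := h u x hu
    nlinarith

theorem MaxMonotoneOp.isClosed {T : ℝ → Set ℝ} (hT : MaxMonotoneOp T) (y : ℝ) :
    IsClosed (T y) := by
  have : T y = ⋂ (x : ℝ) (u : ℝ) (_ : u ∈ T x), {v | 0 ≤ (v - u) * (y - x)} := by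
    ext v
    simp only [Set.mem_iInter, Set.mem_ofPred_eq]
    exact ⟨fun hv x u hu => hT.1 hv hu, fun h => hT.mem_of_related h⟩
  rw [this]
  refine isClosed_iInter fun x => isClosed_iInter fun u => isClosed_iInter fun _ => ?_
  exact isClosed_le continuous_const (by fun_prop)

theorem MaxMonotoneOp.ordConnected {T : ℝ → Set ℝ} (hT : MaxMonotoneOp T) (y : ℝ) :
    (T y).OrdConnected := by
  refine ⟨fun u₁ h₁ u₂ h₂ v hv => hT.mem_of_related fun x u hu => ?_⟩
  have a₁ := hT.1 h₁ hu
  have a₂ := hT.1 h₂ hu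
  rcases le_total x y with h | h
  · nlinarith [mul_nonneg (sub_nonneg.2 hv.1) (sub_nonneg.2 h)]
  · nlinarith [mul_nonneg (sub_nonneg.2 hv.2) (sub_nonneg.2 h)]

/-- The domain of a maximal monotone operator on the line is an interval. -/
theorem MaxMonotoneOp.ordConnected_dom {T : ℝ → Set ℝ} (hT : MaxMonotoneOp T) :
    {x | (T x).Nonempty}.OrdConnected := by
  refine ⟨fun x hx y hy z hz => ?_⟩
  obtain ⟨a, ha⟩ := hx
  obtain ⟨b, hb⟩ := hy
  by_cases hze : (T z).Nonempty
  · exact hze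
  have hzx : x < z := lt_of_le_of_ne hz.1 fun h => hze (h ▸ ⟨a, ha⟩)
  have hzy : z < y := lt_of_le_of_ne hz.2 fun h => hze (h ▸ ⟨b, hb⟩)
  -- the supremum of the values to the left of `z` is a value at `z`
  let L : Set ℝ := {u | ∃ t, t < z ∧ u ∈ T t}
  have hL : BddAbove L := ⟨b, fun u ⟨t, ht, hu⟩ => hT.1.le hu hb (ht.trans hzy)⟩
  have hne : L.Nonempty := ⟨a, x, hzx, ha⟩
  refine ⟨sSup L, hT.mem_of_related fun t u hu => ?_⟩
  rcases lt_trichotomy t z with h | h | h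
  · exact mul_nonneg (sub_nonneg.2 (le_csSup hL ⟨t, h, hu⟩)) (sub_nonneg.2 h.le)
  · simp [h]
  · refine mul_nonneg_of_nonpos_of_nonpos (sub_nonpos.2 (csSup_le hne ?_)) (sub_nonpos.2 h.le)
    rintro u' ⟨t', ht', hu'⟩
    exact hT.1.le hu' hu (ht'.trans h)

/-- If all values at `y` lie below `α` and the domain does not end before `y`, then some value
strictly to the right of `y` is still below `α`. When `T y` is empty this says that `T` is
unbounded below on the right of `y`. -/
theorem MaxMonotoneOp.exists_right {T : ℝ → Set ℝ} (hT : MaxMonotoneOp T) {y α d : ℝ}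
    (hα : ∀ u ∈ T y, u < α) (hyd : y ≤ d) (hd : (T d).Nonempty) :
    ∃ x, y < x ∧ ∃ u ∈ T x, u < α := by
  have h : α ∉ T y := fun h => lt_irrefl _ (hα α h)
  contrapose! h
  refine hT.mem_of_related fun x u hu => ?_
  rcases lt_trichotomy x y with hx | hx | hx
  · obtain ⟨v, hv⟩ := hT.ordConnected_dom.out ⟨u, hu⟩ hd ⟨hx.le, hyd⟩
    have h1 := hT.1.le hu hv hx
    have h2 := hα v hv
    exact mul_nonneg (by linarith) (by linarith)
  · simp [hx]
  · have := h x hx u hu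
    exact mul_nonneg_of_nonpos_of_nonpos (by linarith) (by linarith)

/-! ### Maximality of the sum -/

theorem MonotoneOp.add {A B : ℝ → Set ℝ} (hA : MonotoneOp A) (hB : MonotoneOp B) :
    MonotoneOp (addOp A B) := by
  rintro x _ y _ ⟨u, hu, v, hv, rfl⟩ ⟨u', hu', v', hv', rfl⟩
  have := hA hu hu'
  have := hB hv hv'
  nlinarith

/-- If `y` is outside the domain of `A` and the domain of `A + B` has a point `d` to the right
of `y`, then the values of `A + B` to the right of `y` are unbounded below. -/
theorem exists_sum_lt_of_empty {A B : ℝ → Set ℝ} (hA : MaxMonotoneOp A) (hB : MaxMonotoneOp B)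
    {y d a b : ℝ} (w : ℝ) (hy : ¬ (A y).Nonempty) (hyd : y < d) (ha : a ∈ A d) (hb : b ∈ B d) :
    ∃ x, y < x ∧ ∃ u ∈ A x, ∃ v ∈ B x, u + v < w := by
  obtain ⟨x, hyx, u, hu, hua⟩ := hA.exists_right (y := y) (α := min a (w - b))
    (fun u hu => absurd ⟨u, hu⟩ hy) hyd.le ⟨a, ha⟩
  have hxd : x ≤ d := by
    by_contra! h
    have := hA.1.le ha hu h
    have := min_le_left a (w - b)
    linarith
  have hub : u < w - b := hua.trans_le (min_le_right _ _)
  by_cases hx : (B x).Nonempty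
  · obtain ⟨v, hv⟩ := hx
    rcases hxd.eq_or_lt with rfl | hlt
    · exact ⟨x, hyx, u, hu, b, hb, by linarith⟩
    · have := hB.1.le hv hb hlt
      exact ⟨x, hyx, u, hu, v, hv, by linarith⟩
  -- otherwise `B` itself is unbounded below to the right of `x`, inside the domain of `A`
  · obtain ⟨x', hxx', v, hv, hvb⟩ := hB.exists_right (y := x) (α := min b (w - a))
      (fun u hu => absurd ⟨u, hu⟩ hx) hxd ⟨b, hb⟩
    have hxd' : x' ≤ d := by
      by_contra! h
      have := hB.1.le hb hv h
      have := min_le_left b (w - a)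
      linarith
    have hva : v < w - a := hvb.trans_le (min_le_right _ _)
    obtain ⟨u', hu'⟩ := hA.ordConnected_dom.out ⟨u, hu⟩ ⟨a, ha⟩ ⟨hxx'.le, hxd'⟩
    rcases hxd'.eq_or_lt with rfl | hlt
    · exact ⟨x', hyx.trans hxx', a, ha, v, hv, by linarith⟩
    · have := hA.1.le hu' ha hlt
      exact ⟨x', hyx.trans hxx', u', hu', v, hv, by linarith⟩

/-- If `y` is in the domain of `A + B` and `w` lies above all of `(A + B) y`, then `A + B` still
takes a value below `w` to the right of `y`. -/
theorem exists_sum_lt_of_lt {A B : ℝ → Set ℝ} (hA : MaxMonotoneOp A) (hB : MaxMonotoneOp B)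
    {y w : ℝ} (hAy : (A y).Nonempty) (hBy : (B y).Nonempty)
    (hw : ∀ u ∈ A y, ∀ v ∈ B y, u + v < w) :
    ∃ x, y < x ∧ ∃ u ∈ A x, ∃ v ∈ B x, u + v < w := by
  obtain ⟨a₀, ha₀⟩ := hAy
  obtain ⟨b₀, hb₀⟩ := hBy
  have bA : BddAbove (A y) := ⟨w - b₀, fun u hu => by linarith [hw u hu b₀ hb₀]⟩
  have bB : BddAbove (B y) := ⟨w - a₀, fun v hv => by linarith [hw a₀ ha₀ v hv]⟩
  have ma := (hA.isClosed y).csSup_mem ⟨a₀, ha₀⟩ bA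
  have mb := (hB.isClosed y).csSup_mem ⟨b₀, hb₀⟩ bB
  have la : ∀ u ∈ A y, u ≤ sSup (A y) := fun u hu => le_csSup bA hu
  have lb : ∀ v ∈ B y, v ≤ sSup (B y) := fun v hv => le_csSup bB hv
  generalize sSup (A y) = a at *
  generalize sSup (B y) = b at *
  have hab := hw a ma b mb
  obtain ⟨x, hyx, u, hu, hua⟩ := hA.exists_right (y := y) (α := a + (w - a - b) / 2)
    (fun u hu => by linarith [la u hu]) le_rfl ⟨a₀, ha₀⟩
  obtain ⟨x', hyx', v, hv, hvb⟩ := hB.exists_right (y := y) (α := b + (w - a - b) / 2)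
    (fun v hv => by linarith [lb v hv]) le_rfl ⟨b₀, hb₀⟩
  rcases lt_trichotomy x x' with h | h | h
  · obtain ⟨v', hv'⟩ := hB.ordConnected_dom.out ⟨b₀, hb₀⟩ ⟨v, hv⟩ ⟨hyx.le, h.le⟩
    have := hB.1.le hv' hv h
    exact ⟨x, hyx, u, hu, v', hv', by linarith⟩
  · subst h
    exact ⟨x, hyx, u, hu, v, hv, by linarith⟩
  · obtain ⟨u', hu'⟩ := hA.ordConnected_dom.out ⟨a₀, ha₀⟩ ⟨u, hu⟩ ⟨hyx'.le, h.le⟩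
    have := hA.1.le hu' hu h
    exact ⟨x', hyx', u', hu', v, hv, by linarith⟩

/-- The operator whose graph is the point reflection of that of `T` in the origin. It turns
statements about the right of a point into statements about the left. -/
def negOp (T : ℝ → Set ℝ) : ℝ → Set ℝ := fun x => {u | -u ∈ T (-x)}

theorem MaxMonotoneOp.neg {T : ℝ → Set ℝ} (hT : MaxMonotoneOp T) : MaxMonotoneOp (negOp T) := by
  refine MaxMonotoneOp.of_related ?_ ?_
  · intro x u y v hu hv
    have := hT.1 hu hv
    nlinarith
  · intro y v h
    refine hT.mem_of_related fun x u hu => ?_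
    have := h (-x) (-u) (by simpa [negOp] using hu)
    nlinarith

/-- A point monotonically related to `A + B`, whose abscissa `y` is not to the right of a point
`d` of the domain of `A + B`, lies in the graph of `A + B` or satisfies `w < u + v` for some
`u ∈ A y` and `v ∈ B y`. -/
theorem mem_or_exists_lt {A B : ℝ → Set ℝ} (hA : MaxMonotoneOp A) (hB : MaxMonotoneOp B)
    {y w d : ℝ} (hyd : y ≤ d) (hAd : (A d).Nonempty) (hBd : (B d).Nonempty)
    (h : ∀ x u, u ∈ addOp A B x → 0 ≤ (w - u) * (y - x)) :
    w ∈ addOp A B y ∨ ∃ u ∈ A y, ∃ v ∈ B y, w < u + v := by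
  have key : ¬ ∃ x, y < x ∧ ∃ u ∈ A x, ∃ v ∈ B x, u + v < w := by
    rintro ⟨x, hyx, u, hu, v, hv, hlt⟩
    have := h x (u + v) ⟨u, hu, v, hv, rfl⟩
    nlinarith
  obtain ⟨a, ha⟩ := hAd
  obtain ⟨b, hb⟩ := hBd
  by_cases hAy : (A y).Nonempty
  · by_cases hBy : (B y).Nonempty
    · by_contra! hc
      refine key (exists_sum_lt_of_lt hA hB hAy hBy fun u hu v hv => ?_)
      exact lt_of_le_of_ne (hc.2 u hu v hv) fun he => hc.1 ⟨u, hu, v, hv, he.symm⟩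
    · have hlt : y < d := lt_of_le_of_ne hyd fun he => hBy (he ▸ ⟨b, hb⟩)
      obtain ⟨x, hx, u, hu, v, hv, huv⟩ := exists_sum_lt_of_empty hB hA w hBy hlt hb ha
      exact absurd ⟨x, hx, v, hv, u, hu, by linarith⟩ key
  · have hlt : y < d := lt_of_le_of_ne hyd fun he => hAy (he ▸ ⟨a, ha⟩)
    exact absurd (exists_sum_lt_of_empty hA hB w hAy hlt ha hb) key

theorem mem_or_exists_gt {A B : ℝ → Set ℝ} (hA : MaxMonotoneOp A) (hB : MaxMonotoneOp B)
    {y w d : ℝ} (hyd : d ≤ y) (hAd : (A d).Nonempty) (hBd : (B d).Nonempty)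
    (h : ∀ x u, u ∈ addOp A B x → 0 ≤ (w - u) * (y - x)) :
    w ∈ addOp A B y ∨ ∃ u ∈ A y, ∃ v ∈ B y, u + v < w := by
  obtain ⟨a, ha⟩ := hAd
  obtain ⟨b, hb⟩ := hBd
  have := mem_or_exists_lt hA.neg hB.neg (y := -y) (w := -w) (d := -d) (by linarith)
    ⟨-a, by simpa [negOp] using ha⟩ ⟨-b, by simpa [negOp] using hb⟩ ?_
  · rcases this with ⟨u, hu, v, hv, he⟩ | ⟨u, hu, v, hv, he⟩
    · exact Or.inl ⟨-u, by simpa [negOp] using hu, -v, by simpa [negOp] using hv, by linarith⟩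
    · exact Or.inr ⟨-u, by simpa [negOp] using hu, -v, by simpa [negOp] using hv, by linarith⟩
  · rintro x _ ⟨u, hu, v, hv, rfl⟩
    have := h (-x) (-u + -v) ⟨-u, hu, -v, hv, rfl⟩
    nlinarith

/-- On the line, the sum of two maximal monotone operators whose domains meet is maximal
monotone; no constraint qualification is needed. -/
theorem maxMono_addOp {A B : ℝ → Set ℝ} (hA : MaxMonotoneOp A) (hB : MaxMonotoneOp B)
    {d : ℝ} (hAd : (A d).Nonempty) (hBd : (B d).Nonempty) : MaxMonotoneOp (addOp A B) := by
  refine MaxMonotoneOp.of_related (hA.1.add hB.1) fun y w h => ?_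
  -- `(A + B) y` is an interval, so it contains `w` if it has points on both sides of `w`
  have both : ∀ u₁ ∈ A y, ∀ v₁ ∈ B y, ∀ u₂ ∈ A y, ∀ v₂ ∈ B y, w < u₁ + v₁ → u₂ + v₂ < w →
      w ∈ addOp A B y := by
    intro u₁ hu₁ v₁ hv₁ u₂ hu₂ v₂ hv₂ h₁ h₂
    have hconv : Convex ℝ (addOp A B y) := by
      have : addOp A B y = {w : ℝ | ∃ u ∈ A y, ∃ v ∈ B y, u + v = w} := by
        ext z
        simp only [addOp, Set.mem_ofPred_eq, eq_comm]
      rw [this]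
      exact (hA.ordConnected y).convex.add (hB.ordConnected y).convex
    exact hconv.ordConnected.out ⟨u₂, hu₂, v₂, hv₂, rfl⟩ ⟨u₁, hu₁, v₁, hv₁, rfl⟩ ⟨h₂.le, h₁.le⟩
  rcases le_total y d with hyd | hyd
  · rcases mem_or_exists_lt hA hB hyd hAd hBd h with hm | ⟨u, hu, v, hv, hlt⟩
    · exact hm
    · rcases mem_or_exists_gt hA hB le_rfl ⟨u, hu⟩ ⟨v, hv⟩ h with hm | ⟨u', hu', v', hv', hlt'⟩
      · exact hm
      · exact both u hu v hv u' hu' v' hv' hlt hlt'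
  · rcases mem_or_exists_gt hA hB hyd hAd hBd h with hm | ⟨u, hu, v, hv, hlt⟩
    · exact hm
    · rcases mem_or_exists_lt hA hB le_rfl ⟨u, hu⟩ ⟨v, hv⟩ h with hm | ⟨u', hu', v', hv', hlt'⟩
      · exact hm
      · exact both u' hu' v' hv' u hu v hv hlt' hlt

/-! ### Vertical points of sums -/

/-- The vertical points of `T`: those at which `T` takes at least two values. The vertical points
of `invOp T` are the heights of the plateaus of `T`. -/
def vert (T : ℝ → Set ℝ) : Set ℝ := {x | (T x).Nontrivial}

theorem finite_vert_add {A B : ℝ → Set ℝ} (hA : (vert A).Finite) (hB : (vert B).Finite) :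
    (vert (addOp A B)).Finite := by
  refine (hA.union hB).subset ?_
  rintro x ⟨_, ⟨u, hu, v, hv, rfl⟩, _, ⟨u', hu', v', hv', rfl⟩, hne⟩
  by_cases h : u = u'
  · refine Or.inr ⟨v, hv, v', hv', fun h' => hne (by rw [h, h'])⟩
  · exact Or.inl ⟨u, hu, u', hu', h⟩

theorem finite_vert_inv_add {A B : ℝ → Set ℝ} (mA : MonotoneOp A) (mB : MonotoneOp B)
    (hA : (vert (invOp A)).Finite) (hB : (vert (invOp B)).Finite) :
    (vert (invOp (addOp A B))).Finite := by
  refine (Set.Finite.image2 (fun u v : ℝ => u + v) hA hB).subset ?_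
  rintro w ⟨x, hx, y, hy, hne⟩
  wlog hlt : x < y generalizing x y
  · exact this y hy x hx hne.symm (lt_of_le_of_ne (not_lt.1 hlt) hne.symm)
  obtain ⟨u, hu, v, hv, rfl⟩ := hx
  obtain ⟨u', hu', v', hv', he⟩ := hy
  have h1 := mA.le hu hu' hlt
  have h2 := mB.le hv hv' hlt
  obtain rfl : u = u' := by linarith
  obtain rfl : v = v' := by linarith
  exact ⟨u, ⟨x, hu, y, hu', hne⟩, v, ⟨x, hv, y, hv', hne⟩, rfl⟩

/-! ### From pieces to finitely many vertical points -/

theorem Breakpoints.cover (B : Breakpoints) (x : ℝ) :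
    (∃ i, i ≤ B.m ∧ B.pts i = x) ∨ ∃ i, i < B.m ∧ x ∈ B.itv i := by
  have key : ∀ k, k ≤ B.m → (x : EReal) < B.pts k →
      (∃ i, i ≤ B.m ∧ B.pts i = x) ∨ ∃ i, i < B.m ∧ x ∈ B.itv i := by
    intro k
    induction k with
    | zero =>
      intro _ h
      rw [B.bot] at h
      exact absurd h not_lt_bot
    | succ k ih =>
      intro hk h
      rcases lt_trichotomy (x : EReal) (B.pts k) with h' | h' | h'
      · exact ih (by omega) h'
      · exact Or.inl ⟨k, by omega, h'.symm⟩
      · exact Or.inr ⟨k, by omega, h', h⟩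
  exact key B.m le_rfl (by rw [B.top]; exact EReal.coe_lt_top x)

theorem Breakpoints.finite_pts (B : Breakpoints) :
    {x : ℝ | ∃ i, i ≤ B.m ∧ B.pts i = x}.Finite := by
  have h : (B.pts '' Set.Iic B.m).Finite := (Set.finite_Iic _).image _
  refine (h.preimage (f := ((↑) : ℝ → EReal)) EReal.coe_injective.injOn).subset ?_
  rintro x ⟨i, hi, he⟩
  exact ⟨i, hi, he⟩

/-- The restriction of `T` to each interval of `B` is of one of the three kinds allowed in the
definition of `𝒯(B)`. -/
def HasPieces (B : Breakpoints) (T : ℝ → Set ℝ) : Prop :=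
  ∀ i : ℕ, i < B.m →
    SingleConstOn T (B.itv i) ∨ SingleContStrictMonoOn T (B.itv i) ∨ EmptyOn T (B.itv i)

theorem finite_vert_of_pieces {B : Breakpoints} {T : ℝ → Set ℝ} (h : HasPieces B T) :
    (vert T).Finite := by
  refine B.finite_pts.subset fun x hx => ?_
  rcases B.cover x with hB | ⟨i, hi, hxi⟩
  · exact hB
  exfalso
  have hx' : (T x).Nontrivial := hx
  rcases h i hi with ⟨c, hc⟩ | ⟨g, hg, -, -⟩ | he
  · simp [hc x hxi] at hx'
  · simp [hg x hxi] at hx'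
  · simp [he x hxi] at hx'

/-- A plateau of `T` contains two points of a common interval of `B`, on which `T` must then be
constant; so there are at most as many plateaus as intervals. -/
theorem finite_vert_inv_of_pieces {B : Breakpoints} {T : ℝ → Set ℝ} (hT : MaxMonotoneOp T)
    (h : HasPieces B T) : (vert (invOp T)).Finite := by
  have hfin : (⋃ i ∈ Set.Iio B.m, {c : ℝ | (B.itv i).Nonempty ∧ ∀ x ∈ B.itv i, T x = {c}}).Finite := by
    refine (Set.finite_Iio _).biUnion fun i _ => Set.Subsingleton.finite ?_
    rintro c ⟨⟨x, hx⟩, hc⟩ c' ⟨-, hc'⟩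
    exact Set.singleton_injective ((hc x hx).symm.trans (hc' x hx))
  refine hfin.subset ?_
  rintro w ⟨x, hx, y, hy, hne⟩
  wlog hlt : x < y generalizing x y
  · exact this y hy x hx hne.symm (lt_of_le_of_ne (not_lt.1 hlt) hne.symm)
  have hseg : ∀ z, x ≤ z → z ≤ y → w ∈ T z := fun z h1 h2 =>
    (hT.inv.ordConnected w).out hx hy ⟨h1, h2⟩
  obtain ⟨z, ⟨hxz, hzy⟩, hz⟩ := (Set.Ioo_infinite hlt).exists_notMem_finite B.finite_pts
  obtain ⟨i, hi, hzi⟩ := (B.cover z).resolve_left hz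
  obtain ⟨z', h1, h2⟩ := EReal.lt_iff_exists_real_btwn.1
    (lt_min (EReal.coe_lt_coe_iff.2 hzy) hzi.2)
  have hzz' : z < z' := EReal.coe_lt_coe_iff.1 h1
  have hz'y : z' < y := EReal.coe_lt_coe_iff.1 (h2.trans_le (min_le_left _ _))
  have hz'i : z' ∈ B.itv i := ⟨hzi.1.trans h1, h2.trans_le (min_le_right _ _)⟩
  have wz := hseg z hxz.le hzy.le
  have wz' := hseg z' (hxz.trans hzz').le hz'y.le
  simp only [Set.mem_iUnion]
  refine ⟨i, hi, ⟨z, hzi⟩, ?_⟩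
  rcases h i hi with ⟨c, hc⟩ | ⟨g, hg, -, hmono⟩ | he
  · have : w = c := by simpa [hc z hzi] using wz
    rwa [this]
  · have e1 : w = g z := by simpa [hg z hzi] using wz
    have e2 : w = g z' := by simpa [hg z' hz'i] using wz'
    have := hmono hzi hz'i hzz'
    linarith
  · simp [he z hzi] at wz

/-! ### From finitely many vertical points to pieces -/

/-- Every finite set of reals is the set of breakpoints of some `B`; only the fact that the
intervals avoid it is recorded. -/
theorem exists_breakpoints_avoiding (F : Finset ℝ) :
    ∃ B : Breakpoints, ∀ i, i < B.m → ∀ x ∈ B.itv i, x ∉ F := by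
  classical
  let p : ℕ → EReal := fun i =>
    if i = 0 then ⊥ else if h : i - 1 < F.card then ((F.orderEmbOfFin rfl ⟨i - 1, h⟩ : ℝ) : EReal)
      else ⊤
  have p0 : p 0 = ⊥ := by simp [p]
  have ps : ∀ k (h : k < F.card), p (k + 1) = ((F.orderEmbOfFin rfl ⟨k, h⟩ : ℝ) : EReal) := by
    intro k h
    simp [p, h]
  have pt : p (F.card + 1) = ⊤ := by simp [p]
  have hmono : ∀ i j : ℕ, i < j → j ≤ F.card + 1 → p i < p j := by
    intro i j hij hj
    obtain ⟨j, rfl⟩ : ∃ k, j = k + 1 := ⟨j - 1, by omega⟩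
    rcases Nat.eq_zero_or_pos i with rfl | hi
    · rw [p0]
      rcases Nat.lt_or_ge j F.card with h | h
      · rw [ps j h]
        exact EReal.bot_lt_coe _
      · obtain rfl : j = F.card := by omega
        rw [pt]
        exact bot_lt_top
    · obtain ⟨i, rfl⟩ : ∃ k, i = k + 1 := ⟨i - 1, by omega⟩
      rw [ps i (by omega)]
      rcases Nat.lt_or_ge j F.card with h | h
      · rw [ps j h, EReal.coe_lt_coe_iff]
        exact (F.orderEmbOfFin rfl).strictMono (Fin.mk_lt_mk.2 (by omega))
      · obtain rfl : j = F.card := by omega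
        rw [pt]
        exact EReal.coe_lt_top _
  refine ⟨⟨F.card + 1, by omega, p, p0, pt, hmono⟩, ?_⟩
  rintro i hi x ⟨h1, h2⟩ hx
  have hr : x ∈ Set.range (F.orderEmbOfFin rfl) := by
    rw [Finset.range_orderEmbOfFin]
    exact hx
  obtain ⟨⟨k, hk⟩, rfl⟩ := hr
  simp only at h1 h2 hi
  rw [← ps k hk] at h1 h2
  -- a point strictly between the consecutive breakpoints `i` and `i + 1` would have an index
  -- strictly between `i` and `i + 1`
  rcases Nat.lt_or_ge i (k + 1) with h | h
  · rcases Nat.eq_or_lt_of_le (show i + 1 ≤ k + 1 from h) with h' | h'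
    · rw [h'] at h2
      exact lt_irrefl _ h2
    · exact lt_asymm h2 (hmono _ _ h' (by omega))
  · rcases Nat.eq_or_lt_of_le h with h' | h'
    · rw [h'] at h1
      exact lt_irrefl _ h1
    · exact lt_asymm h1 (hmono _ _ h' (by omega))

theorem Breakpoints.itv_ordConnected (B : Breakpoints) (i : ℕ) : (B.itv i).OrdConnected := by
  refine ⟨fun x hx y hy z hz => ⟨hx.1.trans_le ?_, lt_of_le_of_lt ?_ hy.2⟩⟩
  · exact EReal.coe_le_coe_iff.2 hz.1
  · exact EReal.coe_le_coe_iff.2 hz.2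

/-- An interval `J` avoiding the ends of an interval `C` lies inside `C` or is disjoint from it.
If `C` is unbounded (or empty), the value of `sSup` or `sInf` is irrelevant and merely adds a
superfluous point to avoid. -/
theorem subset_or_disjoint {C J : Set ℝ} (hC : C.OrdConnected) (hJ : J.OrdConnected)
    (h1 : sSup C ∉ J) (h2 : sInf C ∉ J) : J ⊆ C ∨ ∀ x ∈ J, x ∉ C := by
  by_contra! h
  obtain ⟨hnot, x, hxJ, hxC⟩ := h
  obtain ⟨y, hyJ, hyC⟩ := Set.not_subset.1 hnot
  rcases le_total x y with hxy | hxy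
  · have hub : ∀ c ∈ C, c ≤ y := by
      intro c hc
      by_contra! hlt
      exact hyC (hC.out hxC hc ⟨hxy, hlt.le⟩)
    exact h1 (hJ.out hxJ hyJ ⟨le_csSup ⟨y, hub⟩ hxC, csSup_le ⟨x, hxC⟩ hub⟩)
  · have hlb : ∀ c ∈ C, y ≤ c := by
      intro c hc
      by_contra! hlt
      exact hyC (hC.out hc hxC ⟨hlt.le, hxy⟩)
    exact h2 (hJ.out hyJ hxJ ⟨le_csInf ⟨x, hxC⟩ hlb, csInf_le ⟨y, hlb⟩ hxC⟩)

/-- A maximal monotone operator is continuous wherever it is single-valued: the point just above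
`(x, g x)` is not in the graph, so some point of the graph to the right of `x` is still low, and
symmetrically on the left. -/
theorem MaxMonotoneOp.continuousOn {T : ℝ → Set ℝ} (hT : MaxMonotoneOp T) {J : Set ℝ}
    {g : ℝ → ℝ} (hg : ∀ x ∈ J, T x = {g x}) : ContinuousOn g J := by
  have mem : ∀ x ∈ J, g x ∈ T x := fun x hx => by simp [hg x hx]
  intro x hx
  have notMem : ∀ a, a ≠ g x → ∃ z u, u ∈ T z ∧ (a - u) * (x - z) < 0 := by
    intro a ha
    have : a ∉ T x := by simpa [hg x hx] using ha
    contrapose! this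
    exact hT.mem_of_related this
  refine tendsto_order.2 ⟨fun a ha => ?_, fun a ha => ?_⟩
  · obtain ⟨z, u, hu, hlt⟩ := notMem a ha.ne
    have hzx : z < x := by
      by_contra! h
      rcases h.eq_or_lt with rfl | h
      · simp at hlt
      · have := hT.1.le (mem x hx) hu h
        nlinarith
    have hau : a < u := by
      by_contra! h
      nlinarith
    filter_upwards [self_mem_nhdsWithin, mem_nhdsWithin_of_mem_nhds (Ioi_mem_nhds hzx)]
      with t ht htz
    exact hau.trans_le (hT.1.le hu (mem t ht) htz)
  · obtain ⟨z, u, hu, hlt⟩ := notMem a ha.ne'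
    have hzx : x < z := by
      by_contra! h
      rcases h.eq_or_lt with rfl | h
      · simp at hlt
      · have := hT.1.le hu (mem x hx) h
        nlinarith
    have hau : u < a := by
      by_contra! h
      nlinarith
    filter_upwards [self_mem_nhdsWithin, mem_nhdsWithin_of_mem_nhds (Iio_mem_nhds hzx)]
      with t ht htz
    exact (hT.1.le (mem t ht) hu htz).trans_lt hau

theorem exists_breakpoints {T : ℝ → Set ℝ} (hT : MaxMonotoneOp T) (hV : (vert T).Finite)
    (hH : (vert (invOp T)).Finite) : ∃ B : Breakpoints, HasPieces B T := by
  classical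
  let D : Set ℝ := {x | (T x).Nonempty}
  let F : Finset ℝ := hV.toFinset ∪ hH.toFinset.image (fun w => sSup (invOp T w)) ∪
    hH.toFinset.image (fun w => sInf (invOp T w)) ∪ {sSup D, sInf D}
  obtain ⟨B, hB⟩ := exists_breakpoints_avoiding F
  refine ⟨B, fun i hi => ?_⟩
  have hJ := B.itv_ordConnected i
  have hBF := hB i hi
  generalize B.itv i = J at hJ hBF
  have hJV : ∀ x ∈ J, (T x).Subsingleton := by
    intro x hx
    by_contra hn
    refine hBF x hx ?_
    have : x ∈ vert T := Set.not_subsingleton_iff.1 hn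
    simp [F, this]
  rcases subset_or_disjoint hT.ordConnected_dom hJ (fun h => hBF _ h (by simp [F, D]))
    (fun h => hBF _ h (by simp [F, D])) with hD | hD
  swap
  · exact Or.inr (Or.inr fun x hx => Set.not_nonempty_iff_eq_empty.1 (hD x hx))
  by_cases hc : ∃ w ∈ vert (invOp T), J ⊆ invOp T w
  · obtain ⟨w, -, hw⟩ := hc
    exact Or.inl ⟨w, fun x hx => (hJV x hx).eq_singleton_of_mem (hw hx)⟩
  refine Or.inr (Or.inl ?_)
  have hdisj : ∀ w ∈ vert (invOp T), ∀ x ∈ J, x ∉ invOp T w := by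
    intro w hw
    refine (subset_or_disjoint (hT.inv.ordConnected w) hJ (fun h => hBF _ h ?_)
      (fun h => hBF _ h ?_)).resolve_left fun h => hc ⟨w, hw, h⟩
    · simp only [F, Finset.mem_union, Finset.mem_image, Set.Finite.mem_toFinset]
      exact Or.inl (Or.inl (Or.inr ⟨w, hw, rfl⟩))
    · simp only [F, Finset.mem_union, Finset.mem_image, Set.Finite.mem_toFinset]
      exact Or.inl (Or.inr ⟨w, hw, rfl⟩)
  have hex : ∀ x, ∃ u, x ∈ J → u ∈ T x := by
    intro x
    by_cases hx : x ∈ J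
    · obtain ⟨u, hu⟩ := hD hx
      exact ⟨u, fun _ => hu⟩
    · exact ⟨0, fun h => absurd h hx⟩
  choose g hg using hex
  have hg' : ∀ x ∈ J, T x = {g x} := fun x hx => (hJV x hx).eq_singleton_of_mem (hg x hx)
  refine ⟨g, hg', hT.continuousOn hg', fun x hx y hy hxy => ?_⟩
  refine lt_of_le_of_ne (hT.1.le (hg x hx) (hg y hy) hxy) fun he => ?_
  -- equal values at `x` and `y` would make `g x` the height of a plateau meeting `J`
  refine hdisj (g x) ⟨x, hg x hx, y, ?_, hxy.ne⟩ x hx (hg x hx)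
  rw [he]
  exact hg y hy

/-- The class `𝒯` is closed under taking parallel sums `(T₁⁻¹ + T₂⁻¹)⁻¹`. -/
theorem stmt7 (T₁ T₂ : ℝ → Set ℝ) (h₁ : MemT T₁) (h₂ : MemT T₂) :
    MemT (invOp (addOp (invOp T₁) (invOp T₂))) := by
  obtain ⟨B₁, S₁, m₁, sub₁, p₁⟩ := h₁
  obtain ⟨B₂, S₂, m₂, sub₂, p₂⟩ := h₂
  have f₁ := finite_vert_of_pieces p₁
  have f₂ := finite_vert_of_pieces p₂
  have g₁ := finite_vert_inv_of_pieces m₁ p₁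
  have g₂ := finite_vert_inv_of_pieces m₂ p₂
  by_cases hd : ∃ d, (invOp S₁ d).Nonempty ∧ (invOp S₂ d).Nonempty
  · obtain ⟨d, d₁, d₂⟩ := hd
    have hS := maxMono_addOp m₁.inv m₂.inv d₁ d₂
    -- `invOp (invOp S)` and `S` agree definitionally, so the finiteness facts apply as they are
    obtain ⟨B, hB⟩ := exists_breakpoints hS.inv
      (finite_vert_inv_add m₁.inv.1 m₂.inv.1 f₁ f₂) (finite_vert_add g₁ g₂)
    refine ⟨B, _, hS.inv, ?_, hB⟩
    rintro x w ⟨u, hu, v, hv, he⟩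
    exact ⟨u, sub₁ u hu, v, sub₂ v hv, he⟩
  · refine ⟨B₁, S₁, m₁, ?_, p₁⟩
    rintro x w ⟨u, hu, v, hv, he⟩
    exact absurd ⟨w, ⟨u, sub₁ u hu⟩, ⟨v, sub₂ v hv⟩⟩ hd
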